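/- arXiv:2405.02921 — 2 statements merged into one kernel-verified Lean document; each statement's English description precedes it below -/
import Mathlib

section
/- Let A be a nonsemisimple Artin algebra. Then for every i ≥ 1, ed Ω^∞(A-mod) ≤ ed Ω^i(A-mod) ≤ ℓℓ(A) − 2, where ℓℓ(A) is the Loewy length of A. -/
/-!
The first inequality holds because `Ω^∞(A-mod) ⊆ Ωⁱ(A-mod)` (truncate the coresolution) and `ed` is
monotone.

For the second, let `J` be the radical of `A`, `n` its Loewy length (`n ≥ 2` as `A` is not
semisimple) and `T = A × A/J`. Any module in `Ωⁱ(A-mod)` with `i ≥ 1` is a submodule `K` of a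
finitely generated projective `P`. The image of `K` in the semisimple module `P/JP` is the image of
an idempotent endomorphism, which lifts to an idempotent `e` of `End P` because the kernel of
`End P → End (P/JP)` is nil (`exists_idempotent_lift`). By Nakayama `e` maps `K` onto the projective
module `eP`, so `K ≅ K' × eP` with `K' = K ∩ ker e ⊆ JP`, and hence `J^(n-1) K' = 0`
(`exists_splitting`). This decomposition replaces the usual projective cover argument. Filtering
`K'` by the radical layers, which are finitely generated `A/J`-modules and so lie in `add T`, shows
`K' × eP ∈ [T]_{n-1}` (`mem_bracket_of_pow_smul`); the summand `eP` is absorbed into the last layer.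
-/

open CategoryTheory

universe u

namespace Paper

variable (A : Type u) [Ring A]

/-- A short exact sequence `0 → X → Y → Z → 0` of `A`-modules. -/
def SES (X Y Z : ModuleCat.{u} A) : Prop :=
  ∃ (f : X →ₗ[A] Y) (g : Y →ₗ[A] Z),
    Function.Injective f ∧ Function.Surjective g ∧ LinearMap.range f = LinearMap.ker g

/-- `M` is a direct summand of `X`. -/
def IsSummand (M X : ModuleCat.{u} A) : Prop :=
  ∃ (i : M →ₗ[A] X) (r : X →ₗ[A] M), r.comp i = LinearMap.id

/-- The additive closure `add 𝒯`: direct summands of finite direct sums of objects of `𝒯`. -/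
def addClosure (T : Set (ModuleCat.{u} A)) : Set (ModuleCat.{u} A) :=
  { M | ∃ (n : ℕ) (f : Fin n → ModuleCat.{u} A), (∀ j, f j ∈ T) ∧
      IsSummand A M (ModuleCat.of A (∀ j, (f j : Type u))) }

/-- The extension product `𝒞 • 𝒟`: (summands of) extensions of a module of `𝒟`
by a module of `𝒞`. -/
def bullet (C D : Set (ModuleCat.{u} A)) : Set (ModuleCat.{u} A) :=
  addClosure A { X | ∃ C' ∈ C, ∃ D' ∈ D, SES A C' X D' }

/-- `[𝒯]ₙ`, defined by `[𝒯]₀ = {0}`, `[𝒯]₁ = add 𝒯` and `[𝒯]ₙ = [𝒯]₁ • [𝒯]ₙ₋₁`. -/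
def bracket (T : Set (ModuleCat.{u} A)) : ℕ → Set (ModuleCat.{u} A)
  | 0 => { M | ∀ x : M, x = 0 }
  | 1 => addClosure A T
  | n + 2 => bullet A (addClosure A T) (bracket T (n + 1))

/-- The class `𝒯₁ ⊕ 𝒯₂ = {X ⊕ Y | X ∈ 𝒯₁, Y ∈ 𝒯₂}`. -/
def setSum (T1 T2 : Set (ModuleCat.{u} A)) : Set (ModuleCat.{u} A) :=
  { M | ∃ X ∈ T1, ∃ Y ∈ T2, Nonempty ((M : Type u) ≃ₗ[A] (↥X × ↥Y)) }

/-- The extension dimension of a subcategory `𝒞` of `A`-mod: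
the least `n` such that `𝒞 ⊆ [T]_{n+1}` for some finitely generated module `T`. -/
noncomputable def ed (C : Set (ModuleCat.{u} A)) : ℕ∞ :=
  sInf { n : ℕ∞ | ∃ m : ℕ, n = (m : ℕ∞) ∧
    ∃ T : ModuleCat.{u} A, Module.Finite A T ∧ C ⊆ bracket A {T} (m + 1) }

/-- The category `Ωⁿ(A-mod)` of `n`-th syzygy modules: finitely generated `K` admitting
an exact sequence `0 → K → P⁰ → ⋯ → P^{n-1} → M → 0` with all `Pⁱ` projective,
encoded by a chain of short exact sequences. -/
def SyzCat (n : ℕ) : Set (ModuleCat.{u} A) :=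
  { K | Module.Finite A K ∧
    ∃ (Ks : Fin (n + 1) → ModuleCat.{u} A) (P : Fin n → ModuleCat.{u} A),
      Ks 0 = K ∧ (∀ i, Module.Finite A (Ks i)) ∧
      (∀ i, Module.Finite A (P i) ∧ Module.Projective A (P i)) ∧
      ∀ i : Fin n, SES A (Ks i.castSucc) (P i) (Ks i.succ) }

/-- The category `Ω^∞(A-mod)` of infinite syzygy modules: finitely generated `K` admitting
an exact sequence `0 → K → P⁰ → P¹ → ⋯` with all `Pⁱ` projective. -/
def InfSyzCat : Set (ModuleCat.{u} A) :=
  { K | Module.Finite A K ∧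
    ∃ Ks P : ℕ → ModuleCat.{u} A,
      Ks 0 = K ∧ (∀ i, Module.Finite A (Ks i)) ∧
      (∀ i, Module.Finite A (P i) ∧ Module.Projective A (P i)) ∧
      ∀ i : ℕ, SES A (Ks i) (P i) (Ks (i + 1)) }

/-- A submodule is superfluous (small). -/
def Superfluous {M : ModuleCat.{u} A} (N : Submodule A M) : Prop :=
  ∀ N' : Submodule A M, N ⊔ N' = ⊤ → N' = ⊤

/-- `K` is the (minimal) syzygy `Ω(M)`: the kernel of a projective cover `P → M`. -/
def IsSyzygyOf (K M : ModuleCat.{u} A) : Prop :=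
  ∃ (P : ModuleCat.{u} A) (i : K →ₗ[A] P) (p : P →ₗ[A] M),
    Module.Projective A P ∧ Function.Injective i ∧ Function.Surjective p ∧
    LinearMap.range i = LinearMap.ker p ∧ Superfluous A (LinearMap.ker p)

/-- `K ≅ Ωⁿ(M)`. -/
def IsIterSyzygyOf : ℕ → ModuleCat.{u} A → ModuleCat.{u} A → Prop
  | 0, K, M => Nonempty ((K : Type u) ≃ₗ[A] M)
  | n + 1, K, M => ∃ L, IsIterSyzygyOf n L M ∧ IsSyzygyOf A K L

/-- A submodule is essential. -/
def EssentialIn {M : ModuleCat.{u} A} (N : Submodule A M) : Prop :=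
  ∀ N' : Submodule A M, N ⊓ N' = ⊥ → N' = ⊥

/-- `C` is the cosyzygy `Ω⁻¹(M)`: the cokernel of an injective envelope `M → I`. -/
def IsCosyzygyOf (C M : ModuleCat.{u} A) : Prop :=
  ∃ (I : ModuleCat.{u} A) (j : M →ₗ[A] I) (q : I →ₗ[A] C),
    Module.Injective A I ∧ Function.Injective j ∧ Function.Surjective q ∧
    LinearMap.range j = LinearMap.ker q ∧ EssentialIn A (LinearMap.range j)

/-- `C ≅ Ω⁻ⁿ(M)`. -/
def IsIterCosyzygyOf : ℕ → ModuleCat.{u} A → ModuleCat.{u} A → Prop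
  | 0, C, M => Nonempty ((C : Type u) ≃ₗ[A] M)
  | n + 1, C, M => ∃ L, IsIterCosyzygyOf n L M ∧ IsCosyzygyOf A C L

/-- The Loewy length of `A`: the least `n` with `rad(A)ⁿ = 0`, where `rad(A)` is the
Jacobson radical. -/
noncomputable def loewyLength (R : Type u) [CommRing R] [Algebra R A] : ℕ :=
  sInf { n : ℕ | (Submodule.restrictScalars R ((⊥ : Ideal A).jacobson)) ^ n = ⊥ }

section Helpers

variable {A}

/-! ### Closure properties of `add T` and of `[T]ₙ` -/

lemma IsSummand.trans {M N X : ModuleCat.{u} A} (h₁ : IsSummand A M N) (h₂ : IsSummand A N X) :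
    IsSummand A M X := by
  obtain ⟨i, r, h⟩ := h₁
  obtain ⟨i', r', h'⟩ := h₂
  refine ⟨i' ∘ₗ i, r ∘ₗ r', ?_⟩
  ext x
  have h1 := fun x => LinearMap.congr_fun h x
  have h2 := fun x => LinearMap.congr_fun h' x
  simp only [LinearMap.comp_apply, LinearMap.id_apply] at h1 h2 ⊢
  rw [h2, h1]

lemma addClosure_of_summand {T : Set (ModuleCat.{u} A)} {M N : ModuleCat.{u} A}
    (h : IsSummand A M N) (hN : N ∈ addClosure A T) : M ∈ addClosure A T := by
  obtain ⟨n, f, hf, hs⟩ := hN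
  exact ⟨n, f, hf, h.trans hs⟩

lemma subset_addClosure {T : Set (ModuleCat.{u} A)} : T ⊆ addClosure A T := by
  intro M hM
  refine ⟨1, fun _ => M, fun _ => hM, LinearMap.pi fun _ => LinearMap.id, LinearMap.proj 0, ?_⟩
  ext x
  rfl

lemma bracket_of_summand {T : Set (ModuleCat.{u} A)} (k : ℕ) {M N : ModuleCat.{u} A}
    (h : IsSummand A M N) (hN : N ∈ bracket A T (k + 1)) : M ∈ bracket A T (k + 1) := by
  cases k with
  | zero => exact addClosure_of_summand h hN
  | succ k => exact addClosure_of_summand h hN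

/-- Membership in `add {T}` may be tested with powers of `T` indexed by any finite type. -/
lemma mem_addClosure_of_pi {T M : ModuleCat.{u} A} {ι : Type*} [Finite ι]
    (i : M →ₗ[A] (ι → T)) (r : (ι → T) →ₗ[A] M) (h : ∀ x, r (i x) = x) :
    M ∈ addClosure A {T} := by
  obtain ⟨n, ⟨e⟩⟩ := Finite.exists_equiv_fin ι
  let φ : (ι → T) ≃ₗ[A] (Fin n → T) := LinearEquiv.funCongrLeft A T e.symm
  refine ⟨n, fun _ => T, fun _ => rfl, φ.toLinearMap ∘ₗ i, r ∘ₗ φ.symm.toLinearMap, ?_⟩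
  ext x
  simp [h]

lemma exists_pi_of_mem_addClosure {T M : ModuleCat.{u} A} (hM : M ∈ addClosure A {T}) :
    ∃ (n : ℕ) (i : M →ₗ[A] (Fin n → T)) (r : (Fin n → T) →ₗ[A] M), ∀ x, r (i x) = x := by
  obtain ⟨n, f, hf, i, r, h⟩ := hM
  obtain rfl : f = fun _ => T := funext hf
  exact ⟨n, i, r, fun x => LinearMap.congr_fun h x⟩

lemma prod_mem_addClosure {T : ModuleCat.{u} A} {M N : Type u} [AddCommGroup M] [Module A M]
    [AddCommGroup N] [Module A N] (hM : ModuleCat.of A M ∈ addClosure A {T})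
    (hN : ModuleCat.of A N ∈ addClosure A {T}) :
    ModuleCat.of A (M × N) ∈ addClosure A {T} := by
  obtain ⟨m, i, r, h⟩ := exists_pi_of_mem_addClosure hM
  obtain ⟨n, i', r', h'⟩ := exists_pi_of_mem_addClosure hN
  let φ := LinearEquiv.sumArrowLequivProdArrow (Fin m) (Fin n) A T
  refine mem_addClosure_of_pi (ι := Fin m ⊕ Fin n) (φ.symm.toLinearMap ∘ₗ i.prodMap i')
    (r.prodMap r' ∘ₗ φ.toLinearMap) ?_
  rintro ⟨x, y⟩
  simp only [LinearMap.comp_apply, LinearEquiv.coe_coe, LinearEquiv.apply_symm_apply]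
  exact Prod.ext (h x) (h' y)

/-! ### The test module `A × A/J` -/

/-- The module `T = A × A/J`, where `J` is the Jacobson radical of `A`. -/
abbrev testModule (A : Type u) [Ring A] : ModuleCat.{u} A :=
  ModuleCat.of A (A × (A ⧸ Ring.jacobson A))

lemma projective_mem_addClosure (Q : Type u) [AddCommGroup Q] [Module A Q] [Module.Finite A Q]
    [Module.Projective A Q] : ModuleCat.of A Q ∈ addClosure A {testModule A} := by
  obtain ⟨n, p, hp⟩ := Module.Finite.exists_fin' A Q
  obtain ⟨s, hs⟩ := Module.projective_lifting_property p LinearMap.id hp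
  refine mem_addClosure_of_pi (ι := Fin n)
    ((LinearMap.pi fun j => LinearMap.inl A A (A ⧸ Ring.jacobson A) ∘ₗ LinearMap.proj j) ∘ₗ s)
    (p ∘ₗ LinearMap.pi fun j => LinearMap.fst A A (A ⧸ Ring.jacobson A) ∘ₗ LinearMap.proj j) ?_
  exact fun x => LinearMap.congr_fun hs x

lemma isSemisimpleModule_of_jacobson [IsArtinianRing A] (N : Type u) [AddCommGroup N] [Module A N]
    (h : ∀ a ∈ Ring.jacobson A, ∀ x : N, a • x = 0) : IsSemisimpleModule A N := by
  have hN : Module.IsTorsionBySet A N (Ring.jacobson A) := fun x a => h a a.2 x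
  let _ := hN.module
  exact hN.isSemisimpleModule_iff.1 inferInstance

/-- A finitely generated module killed by `J` is a quotient, hence a summand, of a power of the
semisimple module `A/J`. -/
lemma semisimple_mem_addClosure [IsArtinianRing A] (N : Type u) [AddCommGroup N] [Module A N]
    [Module.Finite A N] (h : ∀ a ∈ Ring.jacobson A, ∀ x : N, a • x = 0) :
    ModuleCat.of A N ∈ addClosure A {testModule A} := by
  obtain ⟨n, p, hp⟩ := Module.Finite.exists_fin' A N
  have : IsSemisimpleModule A (A ⧸ Ring.jacobson A) :=
    isSemisimpleModule_of_jacobson _ fun a ha x => by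
      obtain ⟨x, rfl⟩ := Submodule.Quotient.mk_surjective _ x
      rw [← Submodule.Quotient.mk_smul, Submodule.Quotient.mk_eq_zero]
      exact Ideal.mul_mem_right _ _ ha
  let q : (Fin n → A ⧸ Ring.jacobson A) →ₗ[A] N :=
    LinearMap.lsum A (fun _ => A ⧸ Ring.jacobson A) ℕ fun j =>
      (Ring.jacobson A).liftQ (LinearMap.toSpanSingleton A N (p (Pi.single j 1)))
        fun a ha => by simpa using h a ha _
  have hq : Function.Surjective q := by
    intro y
    obtain ⟨x, rfl⟩ := hp y
    refine ⟨fun j => Submodule.Quotient.mk (x j), ?_⟩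
    conv_rhs => rw [LinearMap.pi_apply_eq_sum_univ p x]
    simp only [q, LinearMap.lsum_apply, LinearMap.sum_apply, LinearMap.comp_apply,
      LinearMap.proj_apply]
    refine Finset.sum_congr rfl fun j _ => ?_
    erw [Submodule.liftQ_apply]
    rw [LinearMap.toSpanSingleton_apply]
    congr 2
    ext k
    simp [Pi.single_apply, eq_comm]
  obtain ⟨s, hs⟩ := IsSemisimpleModule.lifting_property q hq LinearMap.id
  refine mem_addClosure_of_pi (ι := Fin n)
    ((LinearMap.pi fun j => LinearMap.inr A A (A ⧸ Ring.jacobson A) ∘ₗ LinearMap.proj j) ∘ₗ s)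
    (q ∘ₗ LinearMap.pi fun j => LinearMap.snd A A (A ⧸ Ring.jacobson A) ∘ₗ LinearMap.proj j) ?_
  exact fun x => LinearMap.congr_fun hs x

/-- A finitely generated module `N` with `J^(k+1) N = 0` lies in `[A × A/J]_{k+1}`, by induction
along `0 → J^(k+1) N → N → N / J^(k+1) N → 0`. A factor `Q ∈ add (A × A/J)` is carried along: it
joins the semisimple submodule and so does not lengthen the filtration. -/
lemma mem_bracket_of_pow_smul [IsArtinianRing A] (k : ℕ) :
    ∀ (N Q : Type u) [AddCommGroup N] [Module A N] [Module.Finite A N]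
      [AddCommGroup Q] [Module A Q],
      (Ring.jacobson A ^ (k + 1) • (⊤ : Submodule A N) = ⊥) →
      ModuleCat.of A Q ∈ addClosure A {testModule A} →
      ModuleCat.of A (N × Q) ∈ bracket A {testModule A} (k + 1) := by
  induction k with
  | zero =>
    intro N Q _ _ _ _ _ hN hQ
    refine prod_mem_addClosure (semisimple_mem_addClosure N fun a ha x => ?_) hQ
    have := Submodule.smul_mem_smul (N := (⊤ : Submodule A N)) ha (Submodule.mem_top (x := x))
    rw [zero_add, Submodule.pow_one] at hN
    rw [hN] at this
    exact this
  | succ k ih =>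
    intro N Q _ _ _ _ _ hN hQ
    let L : Submodule A N := Ring.jacobson A ^ (k + 1) • ⊤
    have hJL : ∀ a ∈ Ring.jacobson A, ∀ x : L, a • x = 0 := by
      intro a ha x
      have := Submodule.smul_mem_smul ha x.2
      rw [← Submodule.mul_smul, ← Submodule.pow_succ' (h := k.succ_ne_zero), hN] at this
      exact Subtype.ext (by simpa using this)
    have hC := prod_mem_addClosure (semisimple_mem_addClosure L hJL) hQ
    have hQuot : Ring.jacobson A ^ (k + 1) • (⊤ : Submodule A (N ⧸ L)) = ⊥ := by
      rw [← Submodule.range_mkQ L, LinearMap.range_eq_map, ← Submodule.map_smul'']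
      exact Submodule.mkQ_map_self L
    have hD : ModuleCat.of A (N ⧸ L) ∈ bracket A {testModule A} (k + 1) := by
      refine bracket_of_summand k ?_
        (ih (N ⧸ L) PUnit.{u + 1} hQuot (projective_mem_addClosure PUnit.{u + 1}))
      exact ⟨LinearMap.inl A _ _, LinearMap.fst A _ _, by ext; rfl⟩
    refine subset_addClosure ⟨_, hC, _, hD, L.subtype.prodMap LinearMap.id,
      L.mkQ ∘ₗ LinearMap.fst A N Q, ?_, ?_, ?_⟩
    · rintro ⟨a, b⟩ ⟨c, d⟩ h
      have h' := Prod.ext_iff.1 h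
      exact Prod.ext (Subtype.ext h'.1) h'.2
    · exact L.mkQ_surjective.comp Prod.fst_surjective
    · ext ⟨a, b⟩
      simp only [LinearMap.mem_range, LinearMap.mem_ker, LinearMap.comp_apply,
        LinearMap.fst_apply, Submodule.mkQ_apply, Submodule.Quotient.mk_eq_zero]
      constructor
      · rintro ⟨⟨c, d⟩, h⟩
        have h' := (Prod.ext_iff.1 h).1
        have h'' : (c : N) = a := h'
        exact h'' ▸ c.2
      · exact fun ha => ⟨(⟨a, ha⟩, b), rfl⟩

/-! ### Submodules of projective modules -/

/-- Nakayama's lemma for a nilpotent ideal. -/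
lemma le_of_le_sup_smul {P : Type u} [AddCommGroup P] [Module A P] {J : Ideal A}
    (hJ : IsNilpotent J) {X Y : Submodule A P} (h : X ≤ Y ⊔ J • X) : X ≤ Y := by
  obtain ⟨n, hn⟩ := hJ
  have key : ∀ m : ℕ, X ≤ Y ⊔ J ^ m • X := by
    intro m
    induction m with
    | zero => simp [Submodule.pow_zero]
    | succ m ih =>
      have h1 : J ^ m • X ≤ Y ⊔ J ^ (m + 1) • X := by
        refine (Submodule.smul_mono le_rfl h).trans ?_
        rw [Submodule.smul_sup, ← Submodule.mul_smul, ← Submodule.pow_succ]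
        exact sup_le_sup_right Submodule.smul_le_right _
      exact ih.trans (sup_le le_sup_left h1)
  have := key n
  rw [hn] at this
  simpa using this

lemma map_smul_top_le {P P' : Type u} [AddCommGroup P] [Module A P] [AddCommGroup P'] [Module A P']
    (J : Ideal A) (f : P →ₗ[A] P') :
    (J • (⊤ : Submodule A P)).map f ≤ J • (⊤ : Submodule A P') := by
  rw [Submodule.map_smul'']
  exact Submodule.smul_mono le_rfl le_top

/-- The ring homomorphism `End P → End (P/JP)`. -/
def endQuot (J : Ideal A) (P : Type u) [AddCommGroup P] [Module A P] :
    Module.End A P →+* Module.End A (P ⧸ (J • ⊤ : Submodule A P)) where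
  toFun f := Submodule.mapQ _ _ f (Submodule.map_le_iff_le_comap.1 (map_smul_top_le J f))
  map_one' := by ext; rfl
  map_mul' _ _ := by ext; rfl
  map_zero' := by ext; rfl
  map_add' _ _ := by ext; rfl

/-- Idempotents lift along `End P → End (P/JP)` when `P` is projective and `J` is nilpotent. -/
lemma exists_idempotent_lift {J : Ideal A} (hJ : IsNilpotent J) (P : Type u) [AddCommGroup P]
    [Module A P] [Module.Projective A P] (e : Module.End A (P ⧸ (J • ⊤ : Submodule A P)))
    (he : IsIdempotentElem e) :
    ∃ e' : Module.End A P, IsIdempotentElem e' ∧ endQuot J P e' = e := by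
  refine exists_isIdempotentElem_eq_of_ker_isNilpotent _ ?_ e ?_ he
  · intro f hf
    obtain ⟨n, hn⟩ := hJ
    have hf' : ∀ x, f x ∈ J • (⊤ : Submodule A P) := by
      intro x
      have := LinearMap.congr_fun ((RingHom.mem_ker).1 hf) (Submodule.Quotient.mk x)
      exact (Submodule.Quotient.mk_eq_zero _).1 this
    have hpow : ∀ m : ℕ, ∀ x, (f ^ m) x ∈ J ^ m • (⊤ : Submodule A P) := by
      intro m
      induction m with
      | zero => intro x; simp [Submodule.pow_zero]
      | succ m ih =>
        intro x
        have h1 : (J ^ m • (⊤ : Submodule A P)).map f ≤ J ^ (m + 1) • ⊤ := by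
          rw [Submodule.map_smul'', Submodule.pow_succ, Submodule.mul_smul]
          refine Submodule.smul_mono le_rfl ?_
          rintro _ ⟨y, -, rfl⟩
          exact hf' y
        rw [_root_.pow_succ']
        exact h1 ⟨_, ih x, rfl⟩
    refine ⟨n, LinearMap.ext fun x => ?_⟩
    have := hpow n x
    rw [hn] at this
    simpa using this
  · obtain ⟨f, hf⟩ := Module.projective_lifting_property (Submodule.mkQ (J • ⊤ : Submodule A P))
      (e ∘ₗ Submodule.mkQ _) (Submodule.mkQ_surjective _)
    refine ⟨f, ?_⟩
    ext x
    exact LinearMap.congr_fun hf x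

/-- For a linear map `f` from `K` to a finitely generated projective module `P`, `K` is a summand of
`K' × Q` with `Q` a projective submodule of `P` and `K'` a submodule of `K` that `f` maps into `JP`. -/
lemma exists_splitting [IsArtinianRing A] {K P : Type u} [AddCommGroup K]
    [Module A K] [AddCommGroup P] [Module A P] [Module.Finite A P] [Module.Projective A P]
    (f : K →ₗ[A] P) :
    ∃ (K' : Submodule A K) (Q : Submodule A P), Module.Projective A Q ∧
      (∀ x ∈ K', f x ∈ Ring.jacobson A • (⊤ : Submodule A P)) ∧
      IsSummand A (ModuleCat.of A K) (ModuleCat.of A (K' × Q)) := by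
  let J := Ring.jacobson A
  have hJ : IsNilpotent J := IsSemiprimaryRing.isNilpotent
  let N : Submodule A P := J • ⊤
  have : IsSemisimpleModule A (P ⧸ N) := isSemisimpleModule_of_jacobson _ fun a ha x => by
    obtain ⟨x, rfl⟩ := Submodule.Quotient.mk_surjective _ x
    rw [← Submodule.Quotient.mk_smul, Submodule.Quotient.mk_eq_zero]
    exact Submodule.smul_mem_smul ha Submodule.mem_top
  let W : Submodule A (P ⧸ N) := LinearMap.range (N.mkQ ∘ₗ f)
  obtain ⟨π, hπ⟩ := IsSemisimpleModule.extension_property W.subtype W.subtype_injective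
    LinearMap.id
  have hπ' : ∀ w : W, π (w : P ⧸ N) = w := fun w => LinearMap.congr_fun hπ w
  obtain ⟨e, he, hee⟩ := exists_idempotent_lift hJ P (W.subtype ∘ₗ π) (by
    ext x
    simp [hπ'])
  have hmk : ∀ x, N.mkQ (e x) = (π (N.mkQ x) : P ⧸ N) := fun x =>
    LinearMap.congr_fun hee (N.mkQ x)
  have hidem : ∀ x, e (e x) = e x := fun x => LinearMap.congr_fun he x
  have hsub : LinearMap.range e ≤ (LinearMap.range f).map e := by
    refine le_of_le_sup_smul hJ ?_
    rintro _ ⟨p, rfl⟩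
    obtain ⟨k, hk⟩ := (π (N.mkQ p)).2
    have hmem : e p - f k ∈ N := by
      rw [← Submodule.Quotient.mk_eq_zero, Submodule.Quotient.mk_sub, sub_eq_zero]
      exact (hmk p).trans hk.symm
    have h1 : e (e p - f k) ∈ J • LinearMap.range e := by
      rw [LinearMap.range_eq_map, ← Submodule.map_smul'']
      exact ⟨_, hmem, rfl⟩
    have h2 : e p = e (f k) + e (e p - f k) := by simp [hidem]
    rw [h2]
    exact Submodule.add_mem_sup ⟨_, ⟨k, rfl⟩, rfl⟩ h1
  have hproj : Module.Projective A (LinearMap.range e) := by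
    refine Module.Projective.of_split (LinearMap.range e).subtype e.rangeRestrict ?_
    ext ⟨_, x, rfl⟩
    exact hidem x
  let h : K →ₗ[A] LinearMap.range e := e.rangeRestrict ∘ₗ f
  have hh : Function.Surjective h := by
    rintro ⟨y, hy⟩
    obtain ⟨_, ⟨k, rfl⟩, hk⟩ := hsub hy
    exact ⟨k, Subtype.ext hk⟩
  obtain ⟨s, hs⟩ := Module.projective_lifting_property h LinearMap.id hh
  have hs' : ∀ y, h (s y) = y := fun y => LinearMap.congr_fun hs y
  refine ⟨LinearMap.ker h, LinearMap.range e, hproj, ?_, ?_⟩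
  · intro x hx
    have hx0 : e (f x) = 0 := congrArg Subtype.val (LinearMap.mem_ker.1 hx)
    -- the image of `f x` lies in `W`, hence is fixed by the projection that `e` lifts
    have h1 := hmk (f x)
    rw [hx0, map_zero, hπ' ⟨N.mkQ (f x), x, rfl⟩] at h1
    exact (Submodule.Quotient.mk_eq_zero N).1 h1.symm
  · refine ⟨LinearMap.prod (LinearMap.codRestrict _ (LinearMap.id - s ∘ₗ h) ?_) h,
      LinearMap.coprod (LinearMap.ker h).subtype s, ?_⟩
    · intro x
      simp [hs']
    · ext x
      simp

/-- Every submodule of a finitely generated projective module lies in `[A × A/J]_{k+1}` as soon as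
`J^(k+2) = 0`. -/
lemma mem_bracket_of_injective [IsArtinianRing A] {k : ℕ} (hk : Ring.jacobson A ^ (k + 2) = ⊥)
    {K P : ModuleCat.{u} A} [Module.Finite A P] [Module.Projective A P]
    (f : K →ₗ[A] P) (hf : Function.Injective f) :
    K ∈ bracket A {testModule A} (k + 1) := by
  obtain ⟨K', Q, hQ, hK', hs⟩ := exists_splitting f
  have : IsNoetherian A K := isNoetherian_of_injective f hf
  refine bracket_of_summand k hs (mem_bracket_of_pow_smul k K' Q ?_ (projective_mem_addClosure Q))
  let g : K' →ₗ[A] P := f ∘ₗ K'.subtype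
  have hg : Function.Injective g := hf.comp Subtype.val_injective
  refine Submodule.map_injective_of_injective hg ?_
  rw [Submodule.map_bot, Submodule.map_smul'', eq_bot_iff]
  have h1 : Submodule.map g ⊤ ≤ Ring.jacobson A • (⊤ : Submodule A P) := by
    rintro _ ⟨x, -, rfl⟩
    exact hK' x x.2
  refine (Submodule.smul_mono le_rfl h1).trans ?_
  rw [← Submodule.mul_smul, ← Submodule.pow_succ, hk, Submodule.bot_smul]

/-! ### Syzygy categories and the Loewy length -/

lemma ed_mono {C D : Set (ModuleCat.{u} A)} (h : C ⊆ D) : ed A C ≤ ed A D := by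
  refine sInf_le_sInf ?_
  rintro _ ⟨m, rfl, T, hT, hD⟩
  exact ⟨m, rfl, T, hT, h.trans hD⟩

lemma infSyzCat_subset (i : ℕ) : InfSyzCat A ⊆ SyzCat A i := by
  rintro K ⟨hK, Ks, P, h0, h1, h2, h3⟩
  exact ⟨hK, fun j => Ks j, fun j => P j, h0, fun j => h1 j, fun j => h2 j, fun j => h3 j⟩

variable (A) in
/-- The Loewy length of a nonsemisimple Artin algebra is attained and is at least two. -/
lemma exists_loewyLength_eq (R : Type u) [CommRing R] [Algebra R A] [IsArtinianRing A]
    (hA : ¬ IsSemisimpleRing A) :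
    ∃ k, loewyLength A R = k + 2 ∧ Ring.jacobson A ^ (k + 2) = ⊥ := by
  have hJ : (⊥ : Ideal A).jacobson = Ring.jacobson A := Ideal.jacobson_bot
  have hpow : ∀ n ≠ 0, ((Submodule.restrictScalars R ((⊥ : Ideal A).jacobson)) ^ n = ⊥ ↔
      Ring.jacobson A ^ n = ⊥) := by
    intro n hn
    rw [hJ, ← Submodule.restrictScalars_pow hn, Submodule.restrictScalars_eq_bot_iff]
  have hss : Ring.jacobson A ≠ ⊥ := fun h =>
    hA (IsArtinianRing.isSemisimpleRing_iff_jacobson.2 h)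
  have hmem : (Submodule.restrictScalars R ((⊥ : Ideal A).jacobson)) ^ loewyLength A R = ⊥ := by
    refine Nat.sInf_mem
      (s := { n : ℕ | (Submodule.restrictScalars R ((⊥ : Ideal A).jacobson)) ^ n = ⊥ }) ?_
    obtain ⟨n, hn⟩ := IsSemiprimaryRing.isNilpotent (R := A)
    refine ⟨n + 1, (hpow _ n.succ_ne_zero).2 ?_⟩
    rw [Submodule.pow_succ, hn]
    exact Submodule.bot_mul _
  rcases hl : loewyLength A R with _ | _ | k
  · -- the zeroth power is the image of `R`, which vanishes only if `A` is the zero ring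
    rw [hl, Submodule.pow_zero, Submodule.eq_bot_iff] at hmem
    have h1 : (1 : A) = 0 := hmem 1 (Submodule.one_le.1 le_rfl)
    have := subsingleton_of_zero_eq_one h1.symm
    exact absurd (Subsingleton.elim _ _) hss
  · rw [hl, zero_add, hpow _ one_ne_zero, Submodule.pow_one] at hmem
    exact absurd hmem hss
  · rw [hl] at hmem
    exact ⟨k, rfl, (hpow _ (by omega)).1 hmem⟩

end Helpers

/-- Lemma 2.15: for a nonsemisimple Artin algebra `A` and every `i ≥ 1`,
`ed Ω^∞(A-mod) ≤ ed Ωⁱ(A-mod) ≤ ℓℓ(A) - 2`. -/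
theorem stmt7 (R : Type u) [CommRing R] [IsArtinianRing R]
    [Algebra R A] [Module.Finite R A]
    (hA : ¬ IsSemisimpleRing A)
    (i : ℕ) (hi : 1 ≤ i) :
    ed A (InfSyzCat A) ≤ ed A (SyzCat A i) ∧
      ed A (SyzCat A i) ≤ ((loewyLength A R - 2 : ℕ) : ℕ∞) := by
  have : IsArtinianRing A := IsArtinianRing.of_finite R A
  refine ⟨ed_mono (infSyzCat_subset i), ?_⟩
  obtain ⟨k, hl, hk⟩ := exists_loewyLength_eq A R hA
  rw [hl, Nat.add_sub_cancel]
  refine sInf_le ⟨k, rfl, testModule A, inferInstance, ?_⟩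
  rintro K ⟨-, Ks, P, rfl, -, hP, hses⟩
  -- only the first step `0 → K → P⁰` of the coresolution matters
  obtain ⟨f, -, hf, -, -⟩ := hses ⟨0, hi⟩
  have := (hP ⟨0, hi⟩).1
  have := (hP ⟨0, hi⟩).2
  exact mem_bracket_of_injective hk f hf

end Paper
end

section
/- Let A be an Artin algebra. Every minimal short exact sequence 0 → X → Y → Z → 0 of finitely generated A-modules has X without nonzero injective direct summands and Z without nonzero projective direct summands. -/
/-!
An injective summand of `X`, or a projective summand of `Z`, can be transported to `Y`, and then
splits off from the whole sequence.

Let `I` be an injective summand of `X`, with inclusion `i` and retraction `r`. Since `f` is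
injective, `r` extends along `f` to `t : Y → I` with `t ∘ f = r`, so `t` is a retraction of
`f ∘ i`. The decompositions `X ≃ ker r × I` and `Y ≃ ker t × I` given by `splitEquiv` are
compatible with `f`, and the split sequence `0 → I → I → 0 → 0` is a direct summand of the given
one; minimality forces `I = 0`.

Dually, let `P` be a projective summand of `Z`, with inclusion `i` and retraction `r`. Then `i`
lifts along `g` to `s : P → Y` with `g ∘ s = i`, so `r ∘ g` is a retraction of `s`, and
`0 → 0 → P → P → 0` splits off; minimality forces `P = 0`.
-/

open CategoryTheory

universe u

namespace Paper

variable (A : Type u) [Ring A]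

/-- The short exact sequence `0 → X →f Y →g Z → 0` is minimal: it has no nonzero split
short exact sequence as a direct summand. -/
def MinimalSES {X Y Z : ModuleCat.{u} A} (f : X →ₗ[A] Y) (g : Y →ₗ[A] Z) : Prop :=
  (Function.Injective f ∧ Function.Surjective g ∧ LinearMap.range f = LinearMap.ker g) ∧
  ¬ ∃ (X1 X2 Y1 Y2 Z1 Z2 : ModuleCat.{u} A)
      (f1 : X1 →ₗ[A] Y1) (g1 : Y1 →ₗ[A] Z1) (f2 : X2 →ₗ[A] Y2) (g2 : Y2 →ₗ[A] Z2)
      (uu : (X : Type u) ≃ₗ[A] (↥X1 × ↥X2)) (v : (Y : Type u) ≃ₗ[A] (↥Y1 × ↥Y2))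
      (w : (Z : Type u) ≃ₗ[A] (↥Z1 × ↥Z2)),
      (∀ x : X, v (f x) = (f1 (uu x).1, f2 (uu x).2)) ∧
      (∀ y : Y, w (g y) = (g1 (v y).1, g2 (v y).2)) ∧
      (Function.Injective f2 ∧ Function.Surjective g2 ∧
        LinearMap.range f2 = LinearMap.ker g2) ∧
      (∃ s : Z2 →ₗ[A] Y2, g2.comp s = LinearMap.id) ∧
      (∃ y : Y2, y ≠ 0)

/-- The decomposition `M ≃ ker p × N`, `m ↦ (m - j (p m), p m)`, attached to a retraction
`p` of `j : N → M`. -/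
def splitEquiv {A : Type*} [Ring A] {M N : Type*} [AddCommGroup M] [AddCommGroup N]
    [Module A M] [Module A N] (p : M →ₗ[A] N) (j : N →ₗ[A] M) (h : p.comp j = LinearMap.id) :
    M ≃ₗ[A] (↥(LinearMap.ker p) × N) :=
  have hpj : ∀ n, p (j n) = n := fun n => LinearMap.congr_fun h n
  LinearEquiv.ofLinearMap
    (LinearMap.prod
      ((LinearMap.id - j.comp p).codRestrict (LinearMap.ker p) (fun m => by simp [hpj])) p)
    (LinearMap.coprod (LinearMap.ker p).subtype j)
    (by
      refine LinearMap.ext fun x => ?_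
      obtain ⟨⟨k, hk⟩, n⟩ := x
      have hk' : p k = 0 := hk
      refine Prod.ext (Subtype.ext ?_) ?_ <;> simp [hk', hpj])
    (by
      refine LinearMap.ext fun m => ?_
      simp)

/-- Lemma 4.8: in a minimal short exact sequence `0 → X → Y → Z → 0`
over an Artin algebra, `X` has no nonzero injective direct summand and `Z` has no
nonzero projective direct summand. -/
theorem stmt15 (R : Type u) [CommRing R] [IsArtinianRing R]
    [Algebra R A] [Module.Finite R A]
    (X Y Z : ModuleCat.{u} A)
    (hXf : Module.Finite A X) (hYf : Module.Finite A Y) (hZf : Module.Finite A Z)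
    (f : X →ₗ[A] Y) (g : Y →ₗ[A] Z)
    (hmin : MinimalSES A f g) :
    (∀ I : ModuleCat.{u} A, Module.Injective A I → IsSummand A I X →
        Subsingleton (I : Type u)) ∧
    (∀ P : ModuleCat.{u} A, Module.Projective A P → IsSummand A P Z →
        Subsingleton (P : Type u)) := by
  obtain ⟨⟨hf, hg, hfg⟩, hno⟩ := hmin
  have hgf : ∀ x, g (f x) = 0 := fun x =>
    LinearMap.mem_ker.mp (hfg ▸ LinearMap.mem_range_self f x)
  constructor
  · rintro I hI ⟨i, r, hri⟩
    by_contra hns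
    rw [not_subsingleton_iff_nontrivial] at hns
    obtain ⟨y, hy⟩ := exists_ne (0 : I)
    obtain ⟨t, ht⟩ := hI.out f hf r
    have hti : t.comp (f.comp i) = LinearMap.id := by
      refine LinearMap.ext fun a => ?_
      simpa [ht] using LinearMap.congr_fun hri a
    refine hno ⟨ModuleCat.of A (LinearMap.ker r), I, ModuleCat.of A (LinearMap.ker t), I, Z,
      ModuleCat.of A PUnit.{u + 1},
      f.restrict (p := LinearMap.ker r) (q := LinearMap.ker t) (fun x hx => by
        have hx' : r x = 0 := hx
        simp [ht, hx']),
      g.comp (LinearMap.ker t).subtype, LinearMap.id, 0,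
      splitEquiv r i hri, splitEquiv t (f.comp i) hti,
      (LinearEquiv.prodUnique (R := A) (M := Z) (M₂ := PUnit.{u + 1})).symm,
      fun x => ?_, fun y => ?_, ⟨fun _ _ h => h, fun z => ⟨0, rfl⟩, ?_⟩, ⟨0, rfl⟩, y, hy⟩
    · refine Prod.ext (Subtype.ext ?_) ?_
      · change f x - f (i (t (f x))) = f (x - i (r x))
        rw [ht, map_sub]
      · exact ht x
    · refine Prod.ext ?_ rfl
      change g y = g (y - f (i (t y)))
      rw [map_sub, hgf, sub_zero]
    · rw [LinearMap.range_id, LinearMap.ker_zero]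
  · rintro P hP ⟨i, r, hri⟩
    by_contra hns
    rw [not_subsingleton_iff_nontrivial] at hns
    obtain ⟨y, hy⟩ := exists_ne (0 : P)
    obtain ⟨s, hs⟩ := Module.projective_lifting_property g i hg
    have hs' : ∀ a, g (s a) = i a := fun a => LinearMap.congr_fun hs a
    have hrs : (r.comp g).comp s = LinearMap.id := by
      rw [LinearMap.comp_assoc, hs, hri]
    refine hno ⟨X, ModuleCat.of A PUnit.{u + 1}, ModuleCat.of A (LinearMap.ker (r.comp g)), P,
      ModuleCat.of A (LinearMap.ker r), P,
      f.codRestrict (LinearMap.ker (r.comp g)) (fun x => by simp [hgf]),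
      g.restrict (p := LinearMap.ker (r.comp g)) (q := LinearMap.ker r) (fun _ hx => hx),
      0, LinearMap.id,
      (LinearEquiv.prodUnique (R := A) (M := X) (M₂ := PUnit.{u + 1})).symm,
      splitEquiv (r.comp g) s hrs, splitEquiv r i hri,
      fun x => ?_, fun y => ?_,
      ⟨fun _ _ _ => rfl, fun z => ⟨z, rfl⟩, ?_⟩, ⟨LinearMap.id, rfl⟩, y, hy⟩
    · refine Prod.ext (Subtype.ext ?_) ?_
      · change f x - s (r (g (f x))) = f x
        rw [hgf, map_zero, map_zero, sub_zero]
      · change r (g (f x)) = 0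
        rw [hgf, map_zero]
    · refine Prod.ext (Subtype.ext ?_) rfl
      change g y - i (r (g y)) = g (y - s (r (g y)))
      rw [map_sub, hs']
    · rw [LinearMap.range_zero, LinearMap.ker_id]
end Paper
end
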